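/- For every natural number n ≥ 1, the Orchard crossing number of the complete bipartite graph K_{n,n} equals 4n·(n choose 3). -/

import Mathlib

set_option linter.unusedSectionVars false

/-!
Common definitions for the Orchard crossing number
(Feder–Garber, "The Orchard crossing number of an abstract graph").
-/

noncomputable section

/-- Points of the plane. -/
abbrev Pt : Type := ℝ × ℝ

/-- The line through two points of the plane. -/
def lineThrough (p q : Pt) : Set Pt := (affineSpan ℝ ({p, q} : Set Pt) : Set Pt)

/-- A line (or any set) `L` separates the points `P` and `Q` if both lie off `L`
and they lie in different connected components of the complement of `L`. -/
def Separates (L : Set Pt) (P Q : Pt) : Prop :=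
  P ∉ L ∧ Q ∉ L ∧ connectedComponentIn Lᶜ P ≠ connectedComponentIn Lᶜ Q

theorem Separates.symm {L : Set Pt} {P Q : Pt} (h : Separates L P Q) : Separates L Q P :=
  ⟨h.2.1, h.1, h.2.2.symm⟩

/-- A generic configuration: a finite set of points, no three of which are collinear. -/
def GenericConfig (S : Set Pt) : Prop :=
  S.Finite ∧ ∀ p ∈ S, ∀ q ∈ S, ∀ r ∈ S, p ≠ q → p ≠ r → q ≠ r →
    ¬ Collinear ℝ ({p, q, r} : Set Pt)

/-- A finite set of points is in convex position if every point of it is an extreme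
point of its convex hull, i.e. lies outside the convex hull of the other points. -/
def ConvexPosition (S : Set Pt) : Prop :=
  ∀ p ∈ S, p ∉ convexHull ℝ (S \ {p})

variable {V : Type*} [Fintype V] [DecidableEq V]

/-- A rectilinear drawing of a graph on vertex set `V`: an injective placement of the
vertices in the plane whose image is a generic configuration. -/
def IsRectDrawing (f : V → Pt) : Prop :=
  Function.Injective f ∧ GenericConfig (Set.range f)

/-- `sepCount f s t` is `n(s,t)`: the number of (unordered) pairs of vertices, both
different from `s` and `t`, whose drawn points span a line separating `f s` from `f t`. -/
def sepCount (f : V → Pt) (s t : V) : ℕ :=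
  Set.ncard {e : Finset V | ∃ a b : V, e = {a, b} ∧ a ≠ b ∧ s ∉ e ∧ t ∉ e ∧
    Separates (lineThrough (f a) (f b)) (f s) (f t)}

theorem sepCount_symm (f : V → Pt) (s t : V) : sepCount f s t = sepCount f t s := by
  unfold sepCount
  congr 1
  ext e
  constructor
  · rintro ⟨a, b, rfl, hab, hs, ht, hsep⟩
    exact ⟨a, b, rfl, hab, ht, hs, hsep.symm⟩
  · rintro ⟨a, b, rfl, hab, ht, hs, hsep⟩
    exact ⟨a, b, rfl, hab, hs, ht, hsep.symm⟩

/-- The crossing number `n(R(G))` of a drawing: the sum of `n(s,t)` over all edges. -/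
def drawingCrossings (G : SimpleGraph V) (f : V → Pt) : ℕ :=
  ∑ e ∈ G.edgeSet.toFinite.toFinset,
    Sym2.lift ⟨fun s t => sepCount f s t, fun s t => sepCount_symm f s t⟩ e

/-- The Orchard crossing number: the minimum of `n(R(G))` over all rectilinear drawings. -/
def OCN (G : SimpleGraph V) : ℕ :=
  sInf {n | ∃ f : V → Pt, IsRectDrawing f ∧ drawingCrossings G f = n}

/-- The maximal Orchard crossing number: the maximum of `n(R(G))` over all drawings. -/
def MOCN (G : SimpleGraph V) : ℕ :=
  sSup {n | ∃ f : V → Pt, IsRectDrawing f ∧ drawingCrossings G f = n}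

/-- The open segment drawn for an edge. -/
def edgeSeg (f : V → Pt) (e : Sym2 V) : Set Pt :=
  Sym2.lift ⟨fun a b => openSegment ℝ (f a) (f b), fun a b => openSegment_symm ℝ (f a) (f b)⟩ e

/-- The number of unordered pairs of distinct edges of `G` whose drawn open segments
intersect. -/
def crossPairs (G : SimpleGraph V) (f : V → Pt) : ℕ :=
  Set.ncard {p : Finset (Sym2 V) | ∃ e₁ e₂ : Sym2 V, p = {e₁, e₂} ∧ e₁ ≠ e₂ ∧
    e₁ ∈ G.edgeSet ∧ e₂ ∈ G.edgeSet ∧ (edgeSeg f e₁ ∩ edgeSeg f e₂).Nonempty}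

/-- The rectilinear crossing number: the minimum number of crossing pairs of edges
over all rectilinear drawings. -/
def rcr (G : SimpleGraph V) : ℕ :=
  sInf {n | ∃ f : V → Pt, IsRectDrawing f ∧ crossPairs G f = n}

/-- The number of 4-element subsets of the drawn points which are in convex position. -/
def convexFour (f : V → Pt) : ℕ :=
  Set.ncard {Q : Finset Pt | Q.card = 4 ∧ (Q : Set Pt) ⊆ Set.range f ∧
    ConvexPosition (Q : Set Pt)}

/-- The cyclic successor on `Fin n`. -/
def nextFin {n : ℕ} (i : Fin n) : Fin n :=
  ⟨(i.val + 1) % n, Nat.mod_lt _ (Nat.zero_lt_of_lt i.isLt)⟩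

/-- The star graph `K_{n,1}` on `n+1` vertices: the center `0` is joined to each of
the `n` outer vertices. -/
def starGraph (n : ℕ) : SimpleGraph (Fin (n + 1)) :=
  SimpleGraph.fromEdgeSet {e | ∃ i : Fin n, e = s((0 : Fin (n + 1)), i.succ)}

/-- The wheel graph `W_{n,1}` on `n+1` vertices: a cycle on the `n` outer vertices
together with a hub `0` joined to each of them. -/
def wheelGraph (n : ℕ) : SimpleGraph (Fin (n + 1)) :=
  SimpleGraph.fromEdgeSet
    ({e | ∃ i : Fin n, e = s((0 : Fin (n + 1)), i.succ)} ∪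
     {e | ∃ i : Fin n, e = s(i.succ, (nextFin i).succ)})

/-- The cycle graph `C_n` on the outer vertices `1, …, n` of `Fin (n+1)`, together
with the isolated vertex `0`. -/
def cycleWithIsolated (n : ℕ) : SimpleGraph (Fin (n + 1)) :=
  SimpleGraph.fromEdgeSet {e | ∃ i : Fin n, e = s(i.succ, (nextFin i).succ)}

/-- `HullCycle f` says that for every `i`, all the other drawn points lie (strictly) on
one side of the line through `f i` and `f (i+1)`; for an injective generic placement this
means the points are in convex position and occur around the convex hull exactly in the
cyclic order `f 0, f 1, …`. -/
def HullCycle {m : ℕ} (f : Fin m → Pt) : Prop :=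
  ∀ i j l : Fin m, j ≠ i → j ≠ nextFin i → l ≠ i → l ≠ nextFin i →
    ¬ Separates (lineThrough (f i) (f (nextFin i))) (f j) (f l)

end

open Finset

section Orientation

/-- Twice the signed area of the triangle `p q r`. -/
noncomputable def orient (p q r : Pt) : ℝ := (q.1 - p.1) * (r.2 - p.2) - (q.2 - p.2) * (r.1 - p.1)

theorem mem_lineThrough_iff {p q x : Pt} (hpq : p ≠ q) :
    x ∈ lineThrough p q ↔ orient p q x = 0 := by
  obtain ⟨p1, p2⟩ := p
  obtain ⟨q1, q2⟩ := q
  obtain ⟨x1, x2⟩ := x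
  simp only [lineThrough, SetLike.mem_coe, mem_affineSpan_pair_iff_exists_lineMap_eq,
    AffineMap.lineMap_apply, orient, vsub_eq_sub, vadd_eq_add, Prod.mk_sub_mk, Prod.smul_mk,
    Prod.mk_add_mk, Prod.mk.injEq, smul_eq_mul]
  constructor
  · rintro ⟨r, rfl, rfl⟩
    ring
  · intro h
    by_cases h1 : q1 - p1 = 0
    · have h2 : q2 - p2 ≠ 0 := by
        intro h2
        exact hpq (by rw [sub_eq_zero.1 h1, sub_eq_zero.1 h2])
      refine ⟨(x2 - p2) / (q2 - p2), ?_, ?_⟩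
      · rw [h1, zero_mul, zero_sub, neg_eq_zero] at h
        have := (mul_eq_zero.1 h).resolve_left h2
        rw [h1]
        linarith
      · field_simp
        ring
    · refine ⟨(x1 - p1) / (q1 - p1), ?_, ?_⟩
      · field_simp
        ring
      · field_simp
        linarith

theorem continuous_orient (p q : Pt) : Continuous (orient p q) := by
  unfold orient
  fun_prop

theorem convex_orient_pos (p q : Pt) (ε : ℝ) : Convex ℝ {x | 0 < ε * orient p q x} := by
  intro x hx y hy a b ha hb hab
  simp only [Set.mem_ofPred_eq] at *
  have h : ε * orient p q (a • x + b • y) =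
      a * (ε * orient p q x) + b * (ε * orient p q y) := by
    obtain rfl : a = 1 - b := by linarith
    simp only [orient, Prod.fst_add, Prod.snd_add, Prod.smul_fst, Prod.smul_snd, smul_eq_mul]
    ring
  rw [h]
  rcases ha.eq_or_lt with rfl | ha
  · obtain rfl : b = 1 := by linarith
    simpa using hy
  · have := mul_pos ha hx
    have := mul_nonneg hb hy.le
    linarith

theorem separates_iff {p q P Q : Pt} (hpq : p ≠ q) :
    Separates (lineThrough p q) P Q ↔ orient p q P * orient p q Q < 0 := by
  unfold Separates
  rw [mem_lineThrough_iff hpq, mem_lineThrough_iff hpq]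
  constructor
  · rintro ⟨hP, hQ, hne⟩
    by_contra! hcon
    apply hne
    have hpos : 0 < orient p q P * orient p q Q := lt_of_le_of_ne hcon (mul_ne_zero hP hQ).symm
    have hsub : {x | 0 < orient p q P * orient p q x} ⊆ (lineThrough p q)ᶜ := by
      intro x hx hxL
      rw [mem_lineThrough_iff hpq] at hxL
      simp [hxL] at hx
    exact connectedComponentIn_eq ((convex_orient_pos p q _).isPreconnected.subset_connectedComponentIn
      (mul_self_pos.2 hP) hsub hpos)
  · intro h
    have hP : orient p q P ≠ 0 := by rintro h0; simp [h0] at h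
    have hQ : orient p q Q ≠ 0 := by rintro h0; simp [h0] at h
    refine ⟨hP, hQ, fun heq => ?_⟩
    have hP' : P ∈ (lineThrough p q)ᶜ := fun hx => hP ((mem_lineThrough_iff hpq).1 hx)
    have hQ' : Q ∈ (lineThrough p q)ᶜ := fun hx => hQ ((mem_lineThrough_iff hpq).1 hx)
    have hPC := mem_connectedComponentIn hP'
    have hQC := mem_connectedComponentIn hQ'
    rw [← heq] at hQC
    have hmem : (0 : ℝ) ∈ orient p q '' connectedComponentIn (lineThrough p q)ᶜ P := by
      have hc := (continuous_orient p q).continuousOn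
        (s := connectedComponentIn (lineThrough p q)ᶜ P)
      rcases mul_neg_iff.1 h with ⟨h1, h2⟩ | ⟨h1, h2⟩
      · exact isPreconnected_connectedComponentIn.intermediate_value hQC hPC hc ⟨h2.le, h1.le⟩
      · exact isPreconnected_connectedComponentIn.intermediate_value hPC hQC hc ⟨h1.le, h2.le⟩
    obtain ⟨x, hx, hx0⟩ := hmem
    exact connectedComponentIn_subset _ _ hx ((mem_lineThrough_iff hpq).2 hx0)

theorem collinear_iff_orient {p q r : Pt} (hpq : p ≠ q) :
    Collinear ℝ ({p, q, r} : Set Pt) ↔ orient p q r = 0 := by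
  rw [← mem_lineThrough_iff hpq]
  constructor
  · intro h
    exact h.mem_affineSpan_of_mem_of_ne (by simp) (by simp) (by simp) hpq
  · intro h
    have := collinear_insert_of_mem_affineSpan_pair h
    rwa [Set.insert_comm, Set.pair_comm] at this

end Orientation

section Counting

variable {V : Type*} [Fintype V] [DecidableEq V]

/-- The sign of the orientation of the drawn triangle `a b s`. -/
noncomputable def side (f : V → Pt) (a b s : V) : ℤ := (SignType.sign (orient (f a) (f b) (f s)) : ℤ)

/-- Twice the indicator of the line through `a, b` separating `s` from `t`. -/
noncomputable def sepInd (f : V → Pt) (a b s t : V) : ℤ :=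
  side f a b s ^ 2 * side f a b t ^ 2 - side f a b s * side f a b t

theorem coe_sign_cases (x : ℝ) : (0 < x ∧ (SignType.sign x : ℤ) = 1) ∨
    (x = 0 ∧ (SignType.sign x : ℤ) = 0) ∨ (x < 0 ∧ (SignType.sign x : ℤ) = -1) := by
  rcases lt_trichotomy x 0 with h | h | h <;> simp [h]

theorem side_self_left (f : V → Pt) (a s : V) : side f a a s = 0 := by
  simp [side, orient]

theorem side_left (f : V → Pt) (a b : V) : side f a b a = 0 := by
  simp [side, orient]

theorem side_right (f : V → Pt) (a b : V) : side f a b b = 0 := by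
  simp [side, orient, mul_comm]

theorem side_swap_right (f : V → Pt) (a b s : V) : side f a b s = -side f a s b := by
  have : orient (f a) (f b) (f s) = -orient (f a) (f s) (f b) := by simp only [orient]; ring
  simp [side, this, Left.sign_neg]

theorem side_sq {f : V → Pt} (hf : IsRectDrawing f) {a b : V} (hab : a ≠ b) (s : V) :
    side f a b s ^ 2 = if s = a ∨ s = b then 0 else 1 := by
  split_ifs with h
  · rcases h with rfl | rfl
    · simp [side_left]
    · simp [side_right]
  · push Not at h
    have hne : orient (f a) (f b) (f s) ≠ 0 := by
      rw [Ne, ← collinear_iff_orient (hf.1.ne hab)]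
      exact hf.2.2 _ ⟨a, rfl⟩ _ ⟨b, rfl⟩ _ ⟨s, rfl⟩ (hf.1.ne hab) (hf.1.ne h.1.symm)
        (hf.1.ne h.2.symm)
    unfold side
    rcases coe_sign_cases (orient (f a) (f b) (f s)) with h | h | h
    · simp [h.2]
    · exact absurd h.1 hne
    · simp [h.2]

theorem sepInd_eq (f : V → Pt) (a b s t : V) :
    sepInd f a b s t =
      if orient (f a) (f b) (f s) * orient (f a) (f b) (f t) < 0 then 2 else 0 := by
  unfold sepInd side
  rcases coe_sign_cases (orient (f a) (f b) (f s)) with h | h | h <;>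
  rcases coe_sign_cases (orient (f a) (f b) (f t)) with h' | h' | h' <;>
  rw [h.2, h'.2]
  · simp [(mul_pos h.1 h'.1).le]
  · simp [h'.1]
  · simp [mul_neg_of_pos_of_neg h.1 h'.1]
  · simp [h.1]
  · simp [h.1]
  · simp [h.1]
  · simp [mul_neg_of_neg_of_pos h.1 h'.1]
  · simp [h'.1]
  · simp [(mul_pos_of_neg_of_neg h.1 h'.1).le]

theorem two_mul_ncard_pairs (P : V → V → Prop) [DecidableRel P]
    (hsymm : ∀ a b, P a b → P b a) (hirr : ∀ a, ¬ P a a) :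
    2 * Set.ncard {e : Finset V | ∃ a b : V, e = {a, b} ∧ P a b} =
      #{p : V × V | P p.1 p.2} := by
  have himg : {e : Finset V | ∃ a b : V, e = {a, b} ∧ P a b} =
      (({p : V × V | P p.1 p.2} : Finset (V × V)).image fun p => ({p.1, p.2} : Finset V)) := by
    ext e
    simp only [Set.mem_ofPred_eq, coe_image, Set.mem_image, mem_coe, mem_filter, mem_univ,
      true_and, Prod.exists]
    exact ⟨fun ⟨a, b, h, h'⟩ => ⟨a, b, h', h.symm⟩, fun ⟨a, b, h, h'⟩ => ⟨a, b, h'.symm, h⟩⟩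
  rw [himg, Set.ncard_coe_finset, card_eq_sum_card_image fun p : V × V => ({p.1, p.2} : Finset V),
    sum_const_nat (m := 2), mul_comm]
  intro e he
  simp only [mem_image, mem_filter, mem_univ, true_and, Prod.exists] at he
  obtain ⟨a, b, hP, rfl⟩ := he
  have hab : a ≠ b := by rintro rfl; exact hirr a hP
  rw [card_eq_two]
  refine ⟨(a, b), (b, a), by simp [hab], ?_⟩
  ext ⟨x, y⟩
  simp only [mem_filter, mem_univ, true_and, mem_insert, mem_singleton, Prod.mk.injEq]
  constructor
  · rintro ⟨hxy, h⟩
    have hx : x ∈ ({a, b} : Finset V) := h ▸ by simp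
    have hy : y ∈ ({a, b} : Finset V) := h ▸ by simp
    have hne : x ≠ y := by rintro rfl; exact hirr x hxy
    simp only [mem_insert, mem_singleton] at hx hy
    grind
  · rintro (⟨rfl, rfl⟩ | ⟨rfl, rfl⟩)
    · exact ⟨hP, rfl⟩
    · exact ⟨hsymm _ _ hP, pair_comm _ _⟩

theorem sum_sepInd {f : V → Pt} (hf : IsRectDrawing f) (s t : V) :
    ∑ a, ∑ b, sepInd f a b s t = 4 * (sepCount f s t : ℤ) := by
  classical
  let P : V → V → Prop := fun a b => orient (f a) (f b) (f s) * orient (f a) (f b) (f t) < 0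
  have hirr : ∀ a, ¬ P a a := fun a => by simp [P, orient]
  have hsymm : ∀ a b, P a b → P b a := fun a b h => by
    simp only [P, orient] at h ⊢
    linarith
  have hcount : sepCount f s t =
      Set.ncard {e : Finset V | ∃ a b : V, e = {a, b} ∧ P a b} := by
    unfold sepCount
    congr 1
    ext e
    constructor
    · rintro ⟨a, b, he, hab, -, -, h⟩
      exact ⟨a, b, he, (separates_iff (hf.1.ne hab)).1 h⟩
    · rintro ⟨a, b, rfl, h⟩
      have hab : a ≠ b := by rintro rfl; exact hirr a h
      refine ⟨a, b, rfl, hab, ?_, ?_, (separates_iff (hf.1.ne hab)).2 h⟩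
      · simp only [mem_insert, mem_singleton]
        rintro (rfl | rfl) <;> simp [P, orient, mul_comm] at h
      · simp only [mem_insert, mem_singleton]
        rintro (rfl | rfl) <;> simp [P, orient, mul_comm] at h
  have h2 := two_mul_ncard_pairs P hsymm hirr
  rw [← hcount] at h2
  calc ∑ a, ∑ b, sepInd f a b s t
      = ∑ p : V × V, if P p.1 p.2 then 2 else 0 := by
        rw [Fintype.sum_prod_type]
        simp only [sepInd_eq, P]
    _ = 2 * (#{p : V × V | P p.1 p.2} : ℤ) := by
        rw [← sum_filter, sum_const, nsmul_eq_mul, mul_comm]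
    _ = _ := by rw [← h2]; push_cast; ring

/-- The indicator of four vertices being pairwise distinct. -/
def distinctInd (a b s t : V) : ℤ :=
  if a = b then 0 else if s = a ∨ s = b then 0 else if t = a ∨ t = b ∨ t = s then 0 else 1

theorem sum_ite_mem_zero_one (S : Finset V) :
    ∑ t, (if t ∈ S then (0 : ℤ) else 1) = Fintype.card V - #S := by
  have h : ∀ t, (if t ∈ S then (0 : ℤ) else 1) = 1 - if t ∈ S then 1 else 0 := fun t => by
    split_ifs <;> simp
  simp [h]

theorem sum_distinctInd :
    ∑ a : V, ∑ b, ∑ s, ∑ t, distinctInd a b s t =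
      (Fintype.card V : ℤ) * (Fintype.card V - 1) * (Fintype.card V - 2) *
        (Fintype.card V - 3) := by
  have h1 (a b s : V) : ∑ t, distinctInd a b s t =
      if a = b then 0 else if s = a ∨ s = b then 0 else (Fintype.card V - 3 : ℤ) := by
    unfold distinctInd
    split_ifs with h h'
    · simp
    · simp
    · push Not at h'
      have := sum_ite_mem_zero_one ({a, b, s} : Finset V)
      rw [card_eq_three.2 ⟨a, b, s, h, h'.1.symm, h'.2.symm, rfl⟩] at this
      simpa using this
  have h2 (a b : V) : ∑ s, ∑ t, distinctInd a b s t =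
      (if b ∈ ({a} : Finset V) then 0 else 1) *
        ((Fintype.card V - 2) * (Fintype.card V - 3) : ℤ) := by
    simp only [h1, mem_singleton, eq_comm (a := b)]
    split_ifs with h
    · simp
    · have := sum_ite_mem_zero_one ({a, b} : Finset V)
      rw [card_pair h] at this
      simp only [mem_insert, mem_singleton, Nat.cast_ofNat] at this
      rw [one_mul, ← this, sum_mul]
      exact sum_congr rfl fun s _ => by split_ifs <;> simp
  simp only [h2, ← sum_mul, sum_ite_mem_zero_one]
  simp
  ring

theorem sum_sepInd_rotate (f : V → Pt) :
    3 * ∑ a, ∑ b, ∑ s, ∑ t, sepInd f a b s t =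
      ∑ a, ∑ b, ∑ s, ∑ t, (sepInd f a b s t + sepInd f a s b t + sepInd f a t b s) := by
  have h1 : ∑ a, ∑ b, ∑ s, ∑ t, sepInd f a s b t = ∑ a, ∑ b, ∑ s, ∑ t, sepInd f a b s t :=
    sum_congr rfl fun a _ => sum_comm
  have h2 : ∑ a, ∑ b, ∑ s, ∑ t, sepInd f a t b s = ∑ a, ∑ b, ∑ s, ∑ t, sepInd f a b s t := by
    rw [← h1]
    exact sum_congr rfl fun a _ => sum_congr rfl fun b _ => sum_comm
  simp only [sum_add_distrib, h1, h2]
  ring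

theorem sepInd_rotate_eq (f : V → Pt) (a b s t : V) :
    sepInd f a b s t + sepInd f a s b t + sepInd f a t b s =
      (side f a b s * side f a s t) ^ 2 + (side f a s t * side f a t b) ^ 2 +
      (side f a t b * side f a b s) ^ 2 + side f a b s * side f a s t +
      side f a s t * side f a t b + side f a t b * side f a b s := by
  unfold sepInd
  rw [side_swap_right f a b t, side_swap_right f a s b, side_swap_right f a t s]
  ring

theorem distinctInd_cases {f : V → Pt} (hf : IsRectDrawing f) (a b s t : V) :
    (distinctInd a b s t = 0 ∧
      sepInd f a b s t + sepInd f a s b t + sepInd f a t b s = 0) ∨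
    (distinctInd a b s t = 1 ∧ (a ≠ b ∧ a ≠ s ∧ a ≠ t ∧ b ≠ s ∧ b ≠ t ∧ s ≠ t) ∧
      side f a b s ^ 2 = 1 ∧ side f a s t ^ 2 = 1 ∧ side f a t b ^ 2 = 1) := by
  by_cases h : a ≠ b ∧ a ≠ s ∧ a ≠ t ∧ b ≠ s ∧ b ≠ t ∧ s ≠ t
  · right
    obtain ⟨h1, h2, h3, h4, h5, h6⟩ := h
    refine ⟨?_, ⟨h1, h2, h3, h4, h5, h6⟩, ?_, ?_, ?_⟩
    · simp [distinctInd, h1, h2.symm, h3.symm, h4.symm, h5.symm, h6.symm]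
    · simp [side_sq hf h1, h2.symm, h4.symm]
    · simp [side_sq hf h2, h3.symm, h6.symm]
    · simp [side_sq hf h3, h1.symm, h5]
  · left
    constructor
    · unfold distinctInd
      grind
    · have hx := side_swap_right f a b s
      have hy := side_swap_right f a s t
      have hz := side_swap_right f a t b
      have hq : ∀ u v, side f a u v = 0 ∨ side f a u v = 1 ∨ side f a u v = -1 := fun u v => by
        unfold side
        rcases coe_sign_cases (orient (f a) (f u) (f v)) with h | h | h <;> simp [h.2]
      rw [sepInd_rotate_eq]
      by_cases h1 : a = b
      · subst h1; simp [side_self_left, side_left]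
      by_cases h2 : a = s
      · subst h2; simp [side_self_left, side_left]
      by_cases h3 : a = t
      · subst h3; simp [side_self_left, side_left]
      by_cases h4 : b = s
      · subst h4
        rw [hz, side_right]
        rcases hq b t with h | h | h <;> simp [h]
      by_cases h5 : b = t
      · subst h5
        rw [hy, side_right]
        rcases hq b s with h | h | h <;> simp [h]
      by_cases h6 : s = t
      · subst h6
        rw [hz, side_right]
        rcases hq b s with h | h | h <;> simp [h]
      exact absurd ⟨h1, h2, h3, h4, h5, h6⟩ h

theorem two_mul_distinctInd_le {f : V → Pt} (hf : IsRectDrawing f) (a b s t : V) :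
    2 * distinctInd a b s t ≤ sepInd f a b s t + sepInd f a s b t + sepInd f a t b s := by
  rcases distinctInd_cases hf a b s t with ⟨h, h'⟩ | ⟨h, -, hx, hy, hz⟩
  · rw [h, h', mul_zero]
  · rw [h, sepInd_rotate_eq]
    rcases sq_eq_one_iff.1 hx with hx | hx <;>
    rcases sq_eq_one_iff.1 hy with hy | hy <;>
    rcases sq_eq_one_iff.1 hz with hz | hz <;>
    simp [hx, hy, hz]

end Counting

section Bipartite

variable {n : ℕ}

/-- The two colour classes of `K_{n,n}`, recorded as signs. -/
def colour : Fin n ⊕ Fin n → ℤ := Sum.elim (fun _ => 1) (fun _ => -1)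

theorem drawingCrossings_bipartite (f : Fin n ⊕ Fin n → Pt) :
    drawingCrossings (completeBipartiteGraph (Fin n) (Fin n)) f =
      ∑ i : Fin n, ∑ j : Fin n, sepCount f (.inl i) (.inr j) := by
  unfold drawingCrossings
  rw [← Fintype.sum_prod_type' (f := fun i j : Fin n => sepCount f (.inl i) (.inr j))]
  symm
  refine sum_bij (fun p _ => s(.inl p.1, .inr p.2)) ?_ ?_ ?_ ?_
  · simp
  · rintro ⟨i, j⟩ - ⟨i', j'⟩ - h
    simpa using h
  · intro e
    induction e with
    | _ u v =>
      rcases u with u | u <;> rcases v with v | v <;> simp [Sym2.eq_swap]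
  · simp

theorem sum_colour : ∑ v : Fin n ⊕ Fin n, colour v = 0 := by
  simp [colour]

theorem colour_sq (v : Fin n ⊕ Fin n) : colour v ^ 2 = 1 := by
  cases v <;> simp [colour]

theorem sum_sum_colour_mul (F : Fin n ⊕ Fin n → Fin n ⊕ Fin n → ℤ) (hF : ∀ s t, F s t = F t s) :
    ∑ s, ∑ t, F s t - ∑ s, ∑ t, colour s * colour t * F s t =
      4 * ∑ i : Fin n, ∑ j : Fin n, F (.inl i) (.inr j) := by
  have h : ∑ i : Fin n, ∑ j : Fin n, F (.inr i) (.inl j) =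
      ∑ i : Fin n, ∑ j : Fin n, F (.inl i) (.inr j) := by
    rw [sum_comm]
    exact sum_congr rfl fun i _ => sum_congr rfl fun j _ => hF _ _
  simp only [Fintype.sum_sum_type, colour, Sum.elim_inl, Sum.elim_inr, sum_add_distrib, h,
    one_mul, mul_one, neg_mul, mul_neg, sum_neg_distrib]
  ring

theorem sum_colour_mul_side_sq {f : Fin n ⊕ Fin n → Pt} (hf : IsRectDrawing f) :
    ∑ a, ∑ b, (∑ s, colour s * side f a b s ^ 2) ^ 2 = 8 * (n : ℤ) ^ 2 - 8 * n := by
  have h (a b : Fin n ⊕ Fin n) : (∑ s, colour s * side f a b s ^ 2) ^ 2 =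
      2 + 2 * colour a * colour b - if a = b then 4 else 0 := by
    split_ifs with hab
    · subst hab
      have := colour_sq a
      simp only [side_self_left]
      simp
      linarith
    · have h1 : ∀ s, colour s * side f a b s ^ 2 =
          colour s - (if s = a then colour a else 0) - if s = b then colour b else 0 := by
        intro s
        rw [side_sq hf hab]
        grind
      simp only [h1, sum_sub_distrib, sum_colour, sum_ite_eq', mem_univ, if_true]
      linear_combination colour_sq a + colour_sq b
  simp only [h, sum_sub_distrib, sum_add_distrib, ← mul_sum, ← sum_mul, sum_colour]
  simp
  ring

theorem crossings_identity {f : Fin n ⊕ Fin n → Pt} (hf : IsRectDrawing f) :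
    16 * (drawingCrossings (completeBipartiteGraph (Fin n) (Fin n)) f : ℤ) =
      ∑ a, ∑ b, ∑ s, ∑ t, sepInd f a b s t - (8 * (n : ℤ) ^ 2 - 8 * n) +
        ∑ a, ∑ b, (∑ s, colour s * side f a b s) ^ 2 := by
  have hswap : ∀ G : (Fin n ⊕ Fin n) → (Fin n ⊕ Fin n) → (Fin n ⊕ Fin n) → (Fin n ⊕ Fin n) → ℤ,
      ∑ s, ∑ t, ∑ a, ∑ b, G a b s t = ∑ a, ∑ b, ∑ s, ∑ t, G a b s t := fun G => by
    simp only [← Fintype.sum_prod_type']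
    exact Fintype.sum_equiv
      ⟨fun p => (p.2.2.1, p.2.2.2, p.1, p.2.1), fun p => (p.2.2.1, p.2.2.2, p.1, p.2.1),
        fun _ => rfl, fun _ => rfl⟩ _ _ fun _ => rfl
  have h := sum_sum_colour_mul (fun s t => ∑ a, ∑ b, sepInd f a b s t) fun s t => by
    simp only [sum_sepInd hf, sepCount_symm f s t]
  have h1 : ∑ s, ∑ t, colour s * colour t * ∑ a, ∑ b, sepInd f a b s t =
      ∑ a, ∑ b, (∑ s, colour s * side f a b s ^ 2) ^ 2 -
        ∑ a, ∑ b, (∑ s, colour s * side f a b s) ^ 2 := by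
    simp only [mul_sum, ← sum_sub_distrib]
    rw [hswap]
    refine sum_congr rfl fun a _ => sum_congr rfl fun b _ => ?_
    simp only [sq (∑ _, _), sum_mul_sum, ← sum_sub_distrib]
    refine sum_congr rfl fun s _ => sum_congr rfl fun t _ => ?_
    unfold sepInd
    ring
  rw [hswap, h1, sum_colour_mul_side_sq hf] at h
  simp only [sum_sepInd hf, ← mul_sum] at h
  rw [drawingCrossings_bipartite]
  push_cast
  linarith

theorem six_mul_choose_three (n : ℕ) : 6 * (n.choose 3 : ℤ) = n * (n - 1) * (n - 2) := by
  match n with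
  | 0 => simp
  | 1 => simp [Nat.choose_eq_zero_of_lt]
  | m + 2 =>
    have h := Nat.descFactorial_eq_factorial_mul_choose (m + 2) 3
    simp only [Nat.descFactorial_succ, Nat.descFactorial_zero, Nat.factorial] at h
    have h' : (m + 2).choose 3 * 6 = m * ((m + 1) * (m + 2)) := by
      simp at h
      linarith
    have h'' : ((m + 2).choose 3 : ℤ) * 6 = m * ((m + 1) * (m + 2)) := by exact_mod_cast h'
    push_cast
    linarith

theorem le_drawingCrossings {f : Fin n ⊕ Fin n → Pt} (hf : IsRectDrawing f) :
    4 * n * n.choose 3 ≤ drawingCrossings (completeBipartiteGraph (Fin n) (Fin n)) f := by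
  have h1 := crossings_identity hf
  have h2 := sum_sepInd_rotate f
  have h3 : 2 * ∑ a : Fin n ⊕ Fin n, ∑ b, ∑ s, ∑ t, distinctInd a b s t ≤
      ∑ a, ∑ b, ∑ s, ∑ t, (sepInd f a b s t + sepInd f a s b t + sepInd f a t b s) := by
    simp only [mul_sum]
    exact sum_le_sum fun a _ => sum_le_sum fun b _ => sum_le_sum fun s _ => sum_le_sum fun t _ =>
      two_mul_distinctInd_le hf a b s t
  have h4 : 0 ≤ ∑ a, ∑ b, (∑ s, colour s * side f a b s) ^ 2 :=
    sum_nonneg fun a _ => sum_nonneg fun b _ => sq_nonneg _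
  rw [sum_distinctInd] at h3
  simp only [Fintype.card_sum, Fintype.card_fin] at h3
  push_cast at h3
  zify
  nlinarith [six_mul_choose_three n]

/-- The position of a vertex in the alternating order. -/
def position : Fin n ⊕ Fin n → ℤ :=
  Sum.elim (fun i => 2 * ((i : ℕ) : ℤ)) (fun j => 2 * ((j : ℕ) : ℤ) + 1)

/-- The drawing with the two colour classes alternating along a parabola. -/
noncomputable def alternating (v : Fin n ⊕ Fin n) : Pt := ((position v : ℝ), (position v : ℝ) ^ 2)

theorem position_injective : Function.Injective (position (n := n)) := by
  rintro (a | a) (b | b) h <;> simp only [position, Sum.elim_inl, Sum.elim_inr] at h <;>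
    first | omega | (congr 1; ext; omega)

theorem orient_alternating (a b s : Fin n ⊕ Fin n) :
    orient (alternating a) (alternating b) (alternating s) =
      (((position b - position a) * (position s - position a) * (position s - position b) : ℤ) :
        ℝ) := by
  simp only [orient, alternating]
  push_cast
  ring

theorem isRectDrawing_alternating : IsRectDrawing (alternating (n := n)) := by
  have hinj : Function.Injective (alternating (n := n)) := fun a b h =>
    position_injective (by simpa [alternating] using congrArg Prod.fst h)
  refine ⟨hinj, Set.finite_range _, ?_⟩
  rintro _ ⟨a, rfl⟩ _ ⟨b, rfl⟩ _ ⟨s, rfl⟩ hab has hbs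
  rw [collinear_iff_orient hab, orient_alternating]
  have h1 := position_injective.ne (ne_of_apply_ne _ hab)
  have h2 := position_injective.ne (ne_of_apply_ne _ has)
  have h3 := position_injective.ne (ne_of_apply_ne _ hbs)
  simp [sub_eq_zero, h1.symm, h2.symm, h3.symm, -Int.cast_sub, -Int.cast_mul]

theorem side_alternating (a b s : Fin n ⊕ Fin n) :
    side alternating a b s = (position b - position a).sign *
      ((position s - position a).sign * (position s - position b).sign) := by
  rw [← Int.sign_mul, ← Int.sign_mul, ← mul_assoc]
  unfold side
  rw [orient_alternating]
  generalize (position b - position a) * (position s - position a) *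
    (position s - position b) = x
  rcases lt_trichotomy x 0 with h | rfl | h
  · simp [h, Int.sign_eq_neg_one_of_neg h]
  · simp
  · simp [h, Int.sign_eq_one_of_pos h]

theorem two_mul_sign_mul_sign {a b : ℤ} (hab : a ≠ b) (x : ℤ) :
    2 * ((x - a).sign * (x - b).sign) =
      (2 * x - 2 * a - 1).sign * (2 * x - 2 * b - 1).sign +
      (2 * (x + 1) - 2 * a - 1).sign * (2 * (x + 1) - 2 * b - 1).sign := by
  have neg {y : ℤ} (h : y < 0) : y.sign = -1 := Int.sign_eq_neg_one_of_neg h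
  have pos {y : ℤ} (h : 0 < y) : y.sign = 1 := Int.sign_eq_one_of_pos h
  have key (y : ℤ) : (y < 0 ∧ y.sign = -1 ∧ (2 * y - 1).sign = -1 ∧ (2 * y + 1).sign = -1) ∨
      (y = 0 ∧ y.sign = 0 ∧ (2 * y - 1).sign = -1 ∧ (2 * y + 1).sign = 1) ∨
      (0 < y ∧ y.sign = 1 ∧ (2 * y - 1).sign = 1 ∧ (2 * y + 1).sign = 1) := by
    rcases lt_trichotomy y 0 with h | rfl | h
    · exact .inl ⟨h, neg h, neg (by omega), neg (by omega)⟩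
    · exact .inr (.inl (by decide))
    · exact .inr (.inr ⟨h, pos h, pos (by omega), pos (by omega)⟩)
  have e1 (c : ℤ) : 2 * x - 2 * c - 1 = 2 * (x - c) - 1 := by ring
  have e2 (c : ℤ) : 2 * (x + 1) - 2 * c - 1 = 2 * (x - c) + 1 := by ring
  simp only [e1, e2]
  rcases key (x - a) with ⟨h, h1, h2, h3⟩ | ⟨h, h1, h2, h3⟩ | ⟨h, h1, h2, h3⟩ <;>
    rcases key (x - b) with ⟨h', h1', h2', h3'⟩ | ⟨h', h1', h2', h3'⟩ | ⟨h', h1', h2', h3'⟩ <;>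
    rw [h1, h2, h3, h1', h2', h3'] <;> omega

theorem sum_colour_mul_side_alternating (a b : Fin n ⊕ Fin n) :
    ∑ s, colour s * side alternating a b s = 0 := by
  by_cases hab : a = b
  · simp [hab, side_self_left]
  have hab' := position_injective.ne hab
  have hrange : ∀ v : Fin n ⊕ Fin n, 0 ≤ position v ∧ position v < 2 * n := by
    rintro (v | v) <;> simp only [position, Sum.elim_inl, Sum.elim_inr] <;> omega
  have htel (m : ℕ) : 2 * ∑ i ∈ range m,
      (((2 * (i : ℤ) - position a).sign * (2 * (i : ℤ) - position b).sign) -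
        ((2 * (i : ℤ) + 1 - position a).sign * (2 * (i : ℤ) + 1 - position b).sign)) =
      1 - (2 * (2 * (m : ℤ)) - 2 * position a - 1).sign *
        (2 * (2 * (m : ℤ)) - 2 * position b - 1).sign := by
    induction m with
    | zero =>
      have ha := (hrange a).1
      have hb := (hrange b).1
      rw [Int.sign_eq_neg_one_of_neg (by simp; omega), Int.sign_eq_neg_one_of_neg (by simp; omega)]
      simp
    | succ m ih =>
      rw [sum_range_succ, mul_add, ih, mul_sub, two_mul_sign_mul_sign hab',
        two_mul_sign_mul_sign hab']
      push_cast
      ring_nf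
  have h := htel n
  have ha := (hrange a).2
  have hb := (hrange b).2
  rw [Int.sign_eq_one_of_pos (a := 2 * (2 * (n : ℤ)) - 2 * position a - 1) (by omega),
    Int.sign_eq_one_of_pos (a := 2 * (2 * (n : ℤ)) - 2 * position b - 1) (by omega),
    sum_range, sum_sub_distrib] at h
  simp only [side_alternating, mul_left_comm (colour _), ← mul_sum]
  rw [Fintype.sum_sum_type]
  simp only [colour, Sum.elim_inl, Sum.elim_inr, one_mul, mul_neg, neg_mul, sum_neg_distrib]
  rw [mul_eq_zero]
  right
  simp only [position, Sum.elim_inl, Sum.elim_inr] at h ⊢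
  linarith

theorem sepInd_rotate_alternating (a b s t : Fin n ⊕ Fin n) :
    sepInd alternating a b s t + sepInd alternating a s b t + sepInd alternating a t b s =
      2 * distinctInd a b s t := by
  rcases distinctInd_cases isRectDrawing_alternating a b s t with
    ⟨h, h'⟩ | ⟨h, ⟨-, -, hat, -⟩, hx, hy, hz⟩
  · rw [h, h', mul_zero]
  · rw [h, sepInd_rotate_eq]
    have hr : 0 < (position t - position a) ^ 2 := by
      have := sub_ne_zero.2 (position_injective.ne hat.symm)
      positivity
    have hp := sq_nonneg (position b - position a)
    have hq := sq_nonneg (position s - position a)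
    have hsum : (position t - position a) ^ 2 * ((position b - position a) *
          ((position s - position a) * (position s - position b))) +
        (position b - position a) ^ 2 * ((position s - position a) *
          ((position t - position a) * (position t - position s))) +
        (position s - position a) ^ 2 * ((position t - position a) *
          ((position b - position a) * (position b - position t))) = 0 := by ring
    simp only [side_alternating, ← Int.sign_mul] at hx hy hz ⊢
    generalize (position b - position a) * ((position s - position a) *
      (position s - position b)) = x at *
    generalize (position s - position a) * ((position t - position a) *
      (position t - position s)) = y at *
    generalize (position t - position a) * ((position b - position a) *
      (position b - position t)) = z at *
    have hpos : ¬ (x.sign = 1 ∧ y.sign = 1 ∧ z.sign = 1) := by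
      simp only [Int.sign_eq_one_iff_pos]
      rintro ⟨h1, h2, h3⟩
      nlinarith [mul_pos hr h1, mul_nonneg hp h2.le, mul_nonneg hq h3.le]
    have hneg : ¬ (x.sign = -1 ∧ y.sign = -1 ∧ z.sign = -1) := by
      simp only [Int.sign_eq_neg_one_iff_neg]
      rintro ⟨h1, h2, h3⟩
      nlinarith [mul_neg_of_pos_of_neg hr h1, mul_nonpos_of_nonneg_of_nonpos hp h2.le,
        mul_nonpos_of_nonneg_of_nonpos hq h3.le]
    rcases sq_eq_one_iff.1 hx with hx | hx <;> rcases sq_eq_one_iff.1 hy with hy | hy <;>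
      rcases sq_eq_one_iff.1 hz with hz | hz <;>
      simp [hx, hy, hz] at hpos hneg ⊢

theorem drawingCrossings_alternating :
    drawingCrossings (completeBipartiteGraph (Fin n) (Fin n)) alternating =
      4 * n * n.choose 3 := by
  have h1 := crossings_identity (isRectDrawing_alternating (n := n))
  have h2 := sum_sepInd_rotate (alternating (n := n))
  simp only [sepInd_rotate_alternating, ← mul_sum, sum_distinctInd, Fintype.card_sum,
    Fintype.card_fin] at h2
  simp only [sum_colour_mul_side_alternating, zero_pow two_ne_zero, sum_const_zero,
    add_zero] at h1
  push_cast at h2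
  zify
  nlinarith [six_mul_choose_three n]

end Bipartite

/-- For n ≥ 1, `OCN(K_{n,n}) = 4n * C(n,3)`. -/
theorem stmt_10 (n : ℕ) (hn : 1 ≤ n) :
    OCN (completeBipartiteGraph (Fin n) (Fin n)) = 4 * n * Nat.choose n 3 := by
  apply le_antisymm
  · exact Nat.sInf_le ⟨alternating, isRectDrawing_alternating, drawingCrossings_alternating⟩
  · refine le_csInf ⟨_, alternating, isRectDrawing_alternating, rfl⟩ ?_
    rintro _ ⟨f, hf, rfl⟩
    exact le_drawingCrossings hf
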